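/- arXiv:1805.10927 — 2 statements merged into one kernel-verified Lean document; each statement's English description precedes it below -/
import Mathlib

section
/- Lemma 1 (sampling size for uniform random node sampling). Let {1,…,N} be partitioned into r clusters C_1,…,C_r with |C_i| = n_i ≥ 1, let n_min = min_i n_i and f = N/n_min. Let I be a uniformly random N'-element subset of {1,…,N} (sampling without replacement), and set n'_i = |I ∩ C_i|. If b is a positive integer and N ≥ N' ≥ 2·f·[b + log(2rN)], then with probability at least 1 − 1/N one has n'_i ≥ b for every i = 1,…,r. -/
/-!
The sample misses a fixed set `T` with probability at most `(1 - n / N) ^ #T`, as if the points were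
sampled independently. Expanding `(1 + y) ^ #(C \ S)` over the subsets of `C` missed by the sample
`S` therefore bounds the exponential moment of the number of missed points of `C` by that of
independent sampling. Markov's inequality at `y = 1` gives
`P(#(S ∩ C) < b) ≤ exp (b - n #C / (2 N))`, and a union bound over the clusters concludes.
-/

section

open Finset

theorem choose_le_choose_succ_mul_one_sub_div {M N n : ℕ} (hM : M < N) (hn : n ≤ N) :
    (M.choose n : ℝ) ≤ (M + 1).choose n * (1 - n / N) := by
  obtain hnM | hMn := le_or_gt n M
  · have absorption : (M.choose n : ℝ) * (M + 1) = (M + 1).choose n * (M + 1 - n) := by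
      have := congrArg (Nat.cast : ℕ → ℝ) (Nat.choose_mul_succ_eq M n)
      rwa [Nat.cast_mul, Nat.cast_mul, Nat.cast_sub (by lia), Nat.cast_succ] at this
    calc (M.choose n : ℝ) = (M + 1).choose n * (1 - n / ((M + 1 : ℕ) : ℝ)) := by
          push_cast
          field_simp
          exact absorption
      _ ≤ (M + 1).choose n * (1 - n / N) := by
          gcongr
          exact hM
  · rw [Nat.choose_eq_zero_of_lt hMn, Nat.cast_zero]
    exact mul_nonneg (Nat.cast_nonneg _)
      (sub_nonneg.2 (div_le_one_of_le₀ (by exact_mod_cast hn) (Nat.cast_nonneg _)))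

theorem choose_sub_le_choose_mul_pow {N n k : ℕ} (hn : n ≤ N) (hk : k ≤ N) :
    ((N - k).choose n : ℝ) ≤ N.choose n * (1 - n / N) ^ k := by
  have one_sub_nonneg : (0 : ℝ) ≤ 1 - n / N :=
    sub_nonneg.2 (div_le_one_of_le₀ (by exact_mod_cast hn) (Nat.cast_nonneg _))
  induction k with
  | zero => simp
  | succ k ih =>
    calc ((N - (k + 1)).choose n : ℝ)
        ≤ (N - (k + 1) + 1).choose n * (1 - n / N) :=
          choose_le_choose_succ_mul_one_sub_div (by lia) hn
      _ = (N - k).choose n * (1 - n / N) := by rw [show N - (k + 1) + 1 = N - k by lia]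
      _ ≤ N.choose n * (1 - n / N) ^ k * (1 - n / N) := by
          gcongr
          exact ih (by lia)
      _ = N.choose n * (1 - n / N) ^ (k + 1) := by ring

variable {α : Type*} [DecidableEq α] {s C : Finset α} {n : ℕ}

theorem filter_disjoint_powersetCard (s T : Finset α) (n : ℕ) :
    {S ∈ powersetCard n s | Disjoint S T} = powersetCard n (s \ T) := by
  ext S
  simp only [mem_filter, mem_powersetCard, subset_sdiff, and_right_comm]

theorem card_filter_disjoint_powersetCard_le {T : Finset α} (hT : T ⊆ s) (hn : n ≤ #s) :
    (#{S ∈ powersetCard n s | Disjoint S T} : ℝ) ≤ (#s).choose n * (1 - n / #s) ^ #T := by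
  rw [filter_disjoint_powersetCard, card_powersetCard, card_sdiff_of_subset hT]
  exact choose_sub_le_choose_mul_pow hn (card_le_card hT)

theorem one_add_pow_card_sdiff {R : Type*} [CommSemiring R] (y : R) (C S : Finset α) :
    (1 + y) ^ #(C \ S) = ∑ T ∈ C.powerset with Disjoint S T, y ^ #T := by
  have missed_subsets : {T ∈ C.powerset | Disjoint S T} = (C \ S).powerset := by
    ext T
    simp only [mem_filter, mem_powerset, subset_sdiff, disjoint_comm]
  simpa [missed_subsets, add_comm] using (sum_pow_mul_eq_add_pow y 1 (C \ S)).symm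

theorem sum_one_add_pow_card_sdiff_le (hC : C ⊆ s) (hn : n ≤ #s) {y : ℝ} (hy : 0 ≤ y) :
    ∑ S ∈ powersetCard n s, (1 + y) ^ #(C \ S) ≤
      (#s).choose n * (1 + y * (1 - n / #s)) ^ #C := by
  calc ∑ S ∈ powersetCard n s, (1 + y) ^ #(C \ S)
      = ∑ T ∈ C.powerset, #{S ∈ powersetCard n s | Disjoint S T} * y ^ #T := by
        simp_rw [one_add_pow_card_sdiff, sum_filter]
        rw [sum_comm]
        simp_rw [← sum_filter, sum_const, nsmul_eq_mul]
    _ ≤ ∑ T ∈ C.powerset, (#s).choose n * (1 - n / #s) ^ #T * y ^ #T := by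
        gcongr with T hT
        exact card_filter_disjoint_powersetCard_le ((mem_powerset.1 hT).trans hC) hn
    _ = (#s).choose n * ∑ T ∈ C.powerset, (y * (1 - n / #s)) ^ #T * 1 ^ (#C - #T) := by
        rw [mul_sum]
        exact sum_congr rfl fun T _ => by rw [mul_pow, one_pow]; ring
    _ = (#s).choose n * (1 + y * (1 - n / #s)) ^ #C := by
        rw [sum_pow_mul_eq_add_pow, add_comm]

theorem card_filter_card_inter_lt_mul_pow_le {x : ℝ} (hx : 1 ≤ x) (𝒜 : Finset (Finset α))
    (C : Finset α) (b : ℕ) :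
    #{S ∈ 𝒜 | #(S ∩ C) < b} * x ^ #C ≤ x ^ b * ∑ S ∈ 𝒜, x ^ #(C \ S) := by
  calc #{S ∈ 𝒜 | #(S ∩ C) < b} * x ^ #C
      = ∑ S ∈ 𝒜 with #(S ∩ C) < b, x ^ #C := by rw [sum_const, nsmul_eq_mul]
    _ ≤ ∑ S ∈ 𝒜 with #(S ∩ C) < b, x ^ b * x ^ #(C \ S) := by
        gcongr with S hS
        rw [← pow_add]
        have card_inter_lt : #(S ∩ C) < b := (mem_filter.1 hS).2
        have card_split : #(C \ S) + #(S ∩ C) = #C := inter_comm C S ▸ card_sdiff_add_card_inter C S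
        exact pow_le_pow_right₀ hx (by lia)
    _ ≤ ∑ S ∈ 𝒜, x ^ b * x ^ #(C \ S) :=
        sum_le_sum_of_subset_of_nonneg (filter_subset _ _) fun _ _ _ => by positivity
    _ = x ^ b * ∑ S ∈ 𝒜, x ^ #(C \ S) := (mul_sum ..).symm

theorem card_filter_card_inter_lt_le (hC : C ⊆ s) (hn : n ≤ #s) (b : ℕ) :
    (#{S ∈ powersetCard n s | #(S ∩ C) < b} : ℝ) ≤
      (#s).choose n * Real.exp (b - n / #s * #C / 2) := by
  set q : ℝ := n / #s
  have q_le_one : q ≤ 1 := div_le_one_of_le₀ (by exact_mod_cast hn) (Nat.cast_nonneg _)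
  have two_pow_le : (2 : ℝ) ^ b ≤ Real.exp b := by
    rw [← Real.exp_one_pow]
    gcongr
    linarith [Real.add_one_le_exp 1]
  have moment_le : (1 + 1 * (1 - q)) ^ #C ≤ Real.exp (-(q * #C / 2)) * 2 ^ #C := by
    calc (1 + 1 * (1 - q)) ^ #C ≤ (Real.exp (-(q / 2)) * 2) ^ #C := by
          refine pow_le_pow_left₀ (by linarith) ?_ _
          linarith [Real.one_sub_le_exp_neg (q / 2)]
      _ = Real.exp (-(q * #C / 2)) * 2 ^ #C := by
          rw [mul_pow, ← Real.exp_nat_mul]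
          ring_nf
  refine le_of_mul_le_mul_right ?_ (by positivity : (0 : ℝ) < 2 ^ #C)
  calc (#{S ∈ powersetCard n s | #(S ∩ C) < b} : ℝ) * 2 ^ #C
      ≤ 2 ^ b * ∑ S ∈ powersetCard n s, 2 ^ #(C \ S) :=
        card_filter_card_inter_lt_mul_pow_le one_le_two _ C b
    _ ≤ 2 ^ b * ((#s).choose n * (1 + 1 * (1 - q)) ^ #C) := by
        gcongr
        simpa only [one_add_one_eq_two] using sum_one_add_pow_card_sdiff_le hC hn zero_le_one
    _ ≤ Real.exp b * ((#s).choose n * (Real.exp (-(q * #C / 2)) * 2 ^ #C)) := by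
        gcongr
    _ = (#s).choose n * Real.exp (b - q * #C / 2) * 2 ^ #C := by
        rw [sub_eq_add_neg, Real.exp_add]
        ring

theorem card_filter_exists_card_inter_lt_le {ι : Type*} [Fintype ι] {C : ι → Finset α}
    (hC : ∀ i, C i ⊆ s) (hn : n ≤ #s) (b : ℕ) :
    (#{S ∈ powersetCard n s | ∃ i, #(S ∩ C i) < b} : ℝ) ≤
      (#s).choose n * ∑ i, Real.exp (b - n / #s * #(C i) / 2) := by
  classical
  calc (#{S ∈ powersetCard n s | ∃ i, #(S ∩ C i) < b} : ℝ)
      = #(univ.biUnion fun i => {S ∈ powersetCard n s | #(S ∩ C i) < b}) := by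
        congr 2
        ext S
        simp
    _ ≤ ∑ i, (#{S ∈ powersetCard n s | #(S ∩ C i) < b} : ℝ) := by
        exact_mod_cast card_biUnion_le
    _ ≤ ∑ i, (#s).choose n * Real.exp (b - n / #s * #(C i) / 2) := by
        gcongr with i
        exact card_filter_card_inter_lt_le (hC i) hn b
    _ = (#s).choose n * ∑ i, Real.exp (b - n / #s * #(C i) / 2) := (mul_sum ..).symm

theorem exp_sub_le_inv_of_log_le {N m n c b x : ℝ} (hN : 0 < N) (hm : 0 < m) (hmc : m ≤ c)
    (hn : 0 ≤ n) (hx : 0 < x) (hlow : 2 * (N / m) * (b + Real.log x) ≤ n) :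
    Real.exp (b - n / N * c / 2) ≤ x⁻¹ := by
  have two_mul_le : 2 * (b + Real.log x) ≤ n / N * m := by
    calc 2 * (b + Real.log x) = 2 * (N / m) * (b + Real.log x) / N * m := by field_simp
      _ ≤ n / N * m := by gcongr
  have mean_le : n / N * m ≤ n / N * c := by gcongr
  calc Real.exp (b - n / N * c / 2) ≤ Real.exp (-Real.log x) := Real.exp_le_exp.2 (by linarith)
    _ = x⁻¹ := by rw [Real.exp_neg, Real.exp_log hx]

theorem one_sub_le_card_filter_div_card {β : Type*} {𝒜 : Finset β} (h𝒜 : 𝒜.Nonempty)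
    {p : β → Prop} [DecidablePred p] {δ : ℝ} (h : #{a ∈ 𝒜 | ¬p a} ≤ #𝒜 * δ) :
    1 - δ ≤ #{a ∈ 𝒜 | p a} / #𝒜 := by
  have card_pos : (0 : ℝ) < #𝒜 := by exact_mod_cast h𝒜.card_pos
  have card_add_card_not : (#{a ∈ 𝒜 | p a} + #{a ∈ 𝒜 | ¬p a} : ℝ) = #𝒜 := by
    exact_mod_cast card_filter_add_card_filter_not p
  rw [le_div_iff₀ card_pos]
  linarith

theorem stmt_0_general {ι : Type*} [Fintype ι] {C : ι → Finset α} {m b : ℕ}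
    (hC : ∀ i, C i ⊆ s) (hm : 0 < m) (hmC : ∀ i, m ≤ #(C i)) (hn : n ≤ #s)
    (hlow : 2 * ((#s : ℝ) / m) * (b + Real.log (2 * Fintype.card ι * #s)) ≤ n) :
    1 - 1 / (#s : ℝ) ≤
      (#{S ∈ powersetCard n s | ∀ i, b ≤ #(S ∩ C i)} : ℝ) / #(powersetCard n s) := by
  have tail_le (i : ι) :
      Real.exp (b - n / #s * #(C i) / 2) ≤ (2 * Fintype.card ι * #s : ℝ)⁻¹ := by
    have card_pos : 0 < #s := hm.trans_le ((hmC i).trans (card_le_card (hC i)))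
    have : Nonempty ι := ⟨i⟩
    exact exp_sub_le_inv_of_log_le (by positivity) (by positivity) (by exact_mod_cast hmC i)
      (by positivity) (by positivity) hlow
  have sum_tail_le : ∑ i, Real.exp (b - n / #s * #(C i) / 2) ≤ 1 / (#s : ℝ) := by
    calc ∑ i, Real.exp (b - n / #s * #(C i) / 2)
        ≤ Fintype.card ι * (2 * Fintype.card ι * #s : ℝ)⁻¹ := by
          simpa using sum_le_card_nsmul univ _ _ fun i _ => tail_le i
      _ = (Fintype.card ι / Fintype.card ι : ℝ) * (1 / #s / 2) := by ring
      _ ≤ 1 * (1 / #s) :=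
          mul_le_mul (div_self_le_one _) (half_le_self (by positivity)) (by positivity) zero_le_one
      _ = 1 / (#s : ℝ) := one_mul _
  refine one_sub_le_card_filter_div_card (powersetCard_nonempty.2 hn) ?_
  simp only [not_forall, not_le, card_powersetCard]
  exact (card_filter_exists_card_inter_lt_le hC hn b).trans (by gcongr)

end

open Finset in
/-- **Lemma 1 (sampling size for uniform random node sampling).**
`{1,…,N}` (modeled as `Fin N`) is partitioned into `r` clusters `C 1, …, C r`,
each nonempty, with minimum cluster size `nmin` and balance `f = N / nmin`.
`I` is a uniformly random `N'`-element subset (sampling without replacement),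
so the probability of an event is the fraction of `N'`-element subsets
realizing it.  If `b > 0` and `N ≥ N' ≥ 2 f (b + log (2 r N))`, then with
probability at least `1 - 1/N` every cluster contributes at least `b`
sampled nodes. -/
theorem stmt_0 (N r N' b : ℕ) (hN : 0 < N) (hr : 0 < r) (hN' : 0 < N') (hb : 0 < b)
    (C : Fin r → Finset (Fin N))
    (hdisj : ∀ i j : Fin r, i ≠ j → Disjoint (C i) (C j))
    (hcover : ∀ x : Fin N, ∃ i : Fin r, x ∈ C i)
    (hne : ∀ i : Fin r, (C i).Nonempty)
    (nmin : ℕ)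
    (hnmin_le : ∀ i : Fin r, nmin ≤ (C i).card)
    (hnmin_mem : ∃ i : Fin r, (C i).card = nmin)
    (hup : N' ≤ N)
    (hlow : 2 * ((N : ℝ) / (nmin : ℝ)) * ((b : ℝ) + Real.log (2 * r * N)) ≤ (N' : ℝ)) :
    1 - 1 / (N : ℝ) ≤
      (((powersetCard N' (univ : Finset (Fin N))).filter
          (fun S => ∀ i : Fin r, b ≤ (S ∩ C i).card)).card : ℝ) /
        ((powersetCard N' (univ : Finset (Fin N))).card : ℝ) := by
  obtain ⟨i, rfl⟩ := hnmin_mem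
  -- `convert` reconciles the two decidability instances of `∀ i : Fin r, _`.
  convert stmt_0_general (n := N') (b := b) (fun i => subset_univ (C i)) (hne i).card_pos hnmin_le
    (by rwa [card_fin]) (by rwa [card_fin, Fintype.card_fin])
  rw [card_fin]
end

section
/- Deterministic lower bound on SbS column sampling probabilities (Appendix Lemma, 'SbS column sampling probabilities'). Let {1,…,N} be partitioned into clusters C_1,…,C_r with |C_i| = n_i ≥ 1, let 0 ≤ q ≤ p ≤ 1 with p > 0 and 0 < ρ ≤ 1, and set μ_i = ρ·[(p−q)·n_i + q·N] and η_i = 1 + (q/p)·(N/n_i − 1). Let d_1,…,d_N be real numbers and α ∈ (0,1) such that |d_j − μ_i| ≤ α·μ_i for every i and every j ∈ C_i. Define s(j) = d_j^{−1} / Σ_{k=1}^N d_k^{−1}. Then for every i and every j ∈ C_i, s(j) ≥ ((1−α)/(1+α)) · 1/(r·n_i·η_i). -/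
/-!
If every member of a cluster of size `n` has degree at least `c * n`, the inverse degrees of that
cluster sum to at most `c⁻¹`, whatever its size, so `r` clusters contribute at most `r / c`. In the
planted-partition model the typical degrees satisfy `μ i = (ρ * p) * (n i * η i)` and
`(ρ * p) * n i ≤ μ i`. Concentration of the degrees therefore gives this with
`c = (1 - α) * (ρ * p)`, while `(d j)⁻¹` is at least `((1 + α) * μ i)⁻¹`; the density `ρ * p`
cancels in the quotient.
-/

section SparsitySampling

open Finset

variable {ι V R K : Type*}

/-- The typical degree `μ` in a cluster of size `n` among `N` nodes of a planted-partition graph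
with overall density factor `ρ`: every node has `n` potential neighbours (itself included) with
edge probability `ρ * p` and `N - n` with edge probability `ρ * q`. -/
def typicalDegree [Ring R] (ρ p q n N : R) : R := ρ * ((p - q) * n + q * N)

theorem mul_le_typicalDegree [CommRing R] [PartialOrder R] [IsOrderedRing R] {ρ p q n N : R}
    (hρ : 0 ≤ ρ) (hq : 0 ≤ q) (hn : n ≤ N) : ρ * p * n ≤ typicalDegree ρ p q n N := by
  have hsplit : typicalDegree ρ p q n N = ρ * p * n + ρ * (q * (N - n)) := by
    rw [typicalDegree]
    ring
  rw [hsplit]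
  exact le_add_of_nonneg_right (mul_nonneg hρ (mul_nonneg hq (sub_nonneg.mpr hn)))

variable [Field K]

/-- The factor `η` by which edges leaving a cluster raise its typical degree above the value
`ρ * p * n` it has for `q = 0`. -/
def degreeInflation (p q n N : K) : K := 1 + q / p * (N / n - 1)

theorem typicalDegree_eq_mul_degreeInflation {ρ p q n N : K} (hp : p ≠ 0) (hn : n ≠ 0) :
    typicalDegree ρ p q n N = ρ * p * (n * degreeInflation p q n N) := by
  simp only [typicalDegree, degreeInflation]
  field_simp
  ring

variable [LinearOrder K] [IsStrictOrderedRing K]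

theorem sum_inv_le_inv_of_mul_card_le {s : Finset V} {d : V → K} {c : K} (hc : 0 < c)
    (hd : ∀ j ∈ s, c * #s ≤ d j) : ∑ j ∈ s, (d j)⁻¹ ≤ c⁻¹ := by
  rcases s.eq_empty_or_nonempty with rfl | hs
  · simpa using hc.le
  have hcard : (0 : K) < #s := mod_cast hs.card_pos
  calc ∑ j ∈ s, (d j)⁻¹ ≤ #s • (c * #s)⁻¹ :=
        sum_le_card_nsmul _ _ _ fun j hj ↦ inv_anti₀ (mul_pos hc hcard) (hd j hj)
    _ = c⁻¹ := by
        rw [nsmul_eq_mul]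
        field_simp

section Cover

variable [Fintype ι] [Fintype V] {C : ι → Finset V}

theorem sum_univ_le_sum_sum_of_cover {M : Type*} [AddCommMonoid M] [PartialOrder M]
    [IsOrderedAddMonoid M] {f : V → M} (hC : ∀ x, ∃ i, x ∈ C i) (hf : ∀ x, 0 ≤ f x) :
    ∑ x, f x ≤ ∑ i, ∑ x ∈ C i, f x := by
  classical
  choose g hg using hC
  calc ∑ x, f x = ∑ i, ∑ x with g x = i, f x := (sum_fiberwise univ g f).symm
    _ ≤ ∑ i, ∑ x ∈ C i, f x := by
        refine sum_le_sum fun i _ ↦ sum_le_sum_of_subset_of_nonneg ?_ fun x _ _ ↦ hf x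
        intro x hx
        rw [← (mem_filter.mp hx).2]
        exact hg x

theorem sum_inv_le_card_div_of_cover {d : V → K} {c : K} (hC : ∀ x, ∃ i, x ∈ C i) (hc : 0 < c)
    (hd : ∀ i, ∀ j ∈ C i, c * #(C i) ≤ d j) : ∑ j, (d j)⁻¹ ≤ Fintype.card ι / c := by
  have hd_nonneg (j : V) : 0 ≤ d j := by
    obtain ⟨i, hj⟩ := hC j
    exact (by positivity : 0 ≤ c * #(C i)).trans (hd i j hj)
  calc ∑ j, (d j)⁻¹ ≤ ∑ i, ∑ j ∈ C i, (d j)⁻¹ :=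
        sum_univ_le_sum_sum_of_cover hC fun j ↦ inv_nonneg.mpr (hd_nonneg j)
    _ ≤ ∑ _i : ι, c⁻¹ := sum_le_sum fun i _ ↦ sum_inv_le_inv_of_mul_card_le hc (hd i)
    _ = Fintype.card ι / c := by rw [sum_const, card_univ, nsmul_eq_mul, div_eq_mul_inv]

theorem le_inv_div_sum_inv_of_abs_sub_le {d : V → K} {μ : ι → K} {c α : K}
    (hC : ∀ x, ∃ i, x ∈ C i) (hc : 0 < c) (hμ : ∀ i, c * #(C i) ≤ μ i) (hα : α < 1)
    (hd : ∀ i, ∀ j ∈ C i, |d j - μ i| ≤ α * μ i) {i : ι} {j : V} (hj : j ∈ C i) :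
    (1 - α) / (1 + α) * (c / (Fintype.card ι * μ i)) ≤ (d j)⁻¹ / ∑ k, (d k)⁻¹ := by
  have hα' : 0 < 1 - α := sub_pos.mpr hα
  have hcard_pos {i j} (hj : j ∈ C i) : (0 : K) < #(C i) := mod_cast card_pos.mpr ⟨j, hj⟩
  have hd_lower (i) (j) (hj : j ∈ C i) : (1 - α) * c * #(C i) ≤ d j :=
    calc (1 - α) * c * #(C i) ≤ (1 - α) * μ i := by
          rw [mul_assoc]
          exact mul_le_mul_of_nonneg_left (hμ i) hα'.le
      _ ≤ d j := by linarith [(abs_le.mp (hd i j hj)).1]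
  have hd_pos (j : V) : 0 < d j := by
    obtain ⟨i, hj⟩ := hC j
    exact (mul_pos (mul_pos hα' hc) (hcard_pos hj)).trans_le (hd_lower i j hj)
  have hd_upper : d j ≤ (1 + α) * μ i := by linarith [(abs_le.mp (hd i j hj)).2]
  have hsum : ∑ k, (d k)⁻¹ ≤ Fintype.card ι / ((1 - α) * c) :=
    sum_inv_le_card_div_of_cover hC (mul_pos hα' hc) hd_lower
  have hsum_pos : 0 < ∑ k, (d k)⁻¹ := sum_pos (fun k _ ↦ inv_pos.mpr (hd_pos k)) ⟨j, mem_univ j⟩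
  calc (1 - α) / (1 + α) * (c / (Fintype.card ι * μ i))
      = ((1 + α) * μ i)⁻¹ / (Fintype.card ι / ((1 - α) * c)) := by
        simp only [div_eq_mul_inv, mul_inv, inv_inv]
        ring
    _ ≤ (d j)⁻¹ / ∑ k, (d k)⁻¹ :=
        div_le_div₀ (inv_pos.mpr (hd_pos j)).le (inv_anti₀ (hd_pos j) hd_upper) hsum_pos hsum

end Cover

theorem stmt_9_general [Fintype ι] [Fintype V] (C : ι → Finset V) (hC : ∀ x, ∃ i, x ∈ C i)
    {p q ρ : K} (hq : 0 ≤ q) (hp : 0 < p) (hρ : 0 < ρ) (d : V → K) {α : K} (hα : α < 1)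
    (hd : ∀ i, ∀ j ∈ C i, |d j - typicalDegree ρ p q #(C i) (Fintype.card V)| ≤
      α * typicalDegree ρ p q #(C i) (Fintype.card V))
    (i : ι) (j : V) (hj : j ∈ C i) :
    (1 - α) / (1 + α) *
        (1 / (Fintype.card ι * #(C i) * degreeInflation p q #(C i) (Fintype.card V))) ≤
      (d j)⁻¹ / ∑ k, (d k)⁻¹ := by
  have hρp : 0 < ρ * p := mul_pos hρ hp
  have hcard : (#(C i) : K) ≠ 0 := mod_cast card_ne_zero_of_mem hj
  have hlower (i : ι) : ρ * p * #(C i) ≤ typicalDegree ρ p q #(C i) (Fintype.card V) :=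
    mul_le_typicalDegree hρ.le hq (mod_cast card_le_univ (C i))
  have hcancel : ρ * p / (Fintype.card ι * typicalDegree ρ p q #(C i) (Fintype.card V)) =
      1 / (Fintype.card ι * #(C i) * degreeInflation p q #(C i) (Fintype.card V)) := by
    rw [typicalDegree_eq_mul_degreeInflation hp.ne' hcard, mul_left_comm,
      ← mul_assoc (Fintype.card ι : K), div_mul_cancel_left₀ hρp.ne', one_div]
  rw [← hcancel]
  exact le_inv_div_sum_inv_of_abs_sub_le hC hρp hlower hα hd hj

end SparsitySampling

open Finset in
/-- **Deterministic lower bound on SbS column sampling probabilities.**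
`Fin N` is partitioned into `r` nonempty clusters `C i` of sizes `nᵢ`,
`0 ≤ q ≤ p ≤ 1`, `p > 0`, `0 < ρ ≤ 1`, `μᵢ = ρ ((p-q) nᵢ + q N)` and
`ηᵢ = 1 + (q/p)(N/nᵢ - 1)`.  If the (degree) numbers `d j` satisfy
`|d j - μᵢ| ≤ α μᵢ` for every `i` and `j ∈ C i`, with `α ∈ (0,1)`, then the
SbS sampling probability `s j = (d j)⁻¹ / ∑ₖ (d k)⁻¹` satisfies
`s j ≥ ((1-α)/(1+α)) / (r nᵢ ηᵢ)` for every `i` and `j ∈ C i`. -/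
theorem stmt_9 (N r : ℕ) (hN : 0 < N) (hr : 0 < r)
    (C : Fin r → Finset (Fin N))
    (hdisj : ∀ i i' : Fin r, i ≠ i' → Disjoint (C i) (C i'))
    (hcover : ∀ x : Fin N, ∃ i : Fin r, x ∈ C i)
    (hne : ∀ i : Fin r, (C i).Nonempty)
    (p q ρ : ℝ) (hq0 : 0 ≤ q) (hqp : q ≤ p) (hp0 : 0 < p) (hp1 : p ≤ 1)
    (hρ0 : 0 < ρ) (hρ1 : ρ ≤ 1)
    (μ η : Fin r → ℝ)
    (hμ : ∀ i : Fin r, μ i = ρ * ((p - q) * ((C i).card : ℝ) + q * N))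
    (hη : ∀ i : Fin r, η i = 1 + q / p * ((N : ℝ) / ((C i).card : ℝ) - 1))
    (d : Fin N → ℝ) (α : ℝ) (hα0 : 0 < α) (hα1 : α < 1)
    (htyp : ∀ i : Fin r, ∀ j ∈ C i, |d j - μ i| ≤ α * μ i) :
    ∀ i : Fin r, ∀ j ∈ C i,
      (1 - α) / (1 + α) * (1 / ((r : ℝ) * ((C i).card : ℝ) * η i)) ≤
        (d j)⁻¹ / ∑ k : Fin N, (d k)⁻¹ := by
  simpa only [hη, degreeInflation, Fintype.card_fin] using stmt_9_general C hcover hq0 hp0 hρ0 d hα1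
    (by simpa only [hμ, typicalDegree, Fintype.card_fin] using htyp)
end
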